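/- arXiv:math/9811006 — 2 statements merged into one kernel-verified Lean document; each statement's English description precedes it below -/
import Mathlib

section
/- Let s, n be coprime positive integers with n ≥ 2s+1, let b be an integer with 0 < b < s, let m be a positive integer, and let k₁, k₂ be integers. Define the real numbers t₁ = k₁/(2n) + (1/(2n))·tan(πb/n)/tan(πs/n) and t₂ = k₂/(2n) − (1/(2n))·tan(πb/n)/tan(πs/n). Then m·(t₁ − t₂) is not an integer. -/
/-!
If `m (t₁ - t₂)` were an integer, then `R = tan (πb/n) / tan (πs/n)` would be rational, and
`0 < R < 1` because the tangent increases on `(0, π/2)`. Writing tangents through the root of unity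
`ζ = exp (2πi/n)`, the relation `tan (πb/n) = R tan (πs/n)` says that `ζ` is a root of the rational
polynomial `(X ^ b - 1) (X ^ s + 1) - R (X ^ s - 1) (X ^ b + 1)`. As cyclotomic polynomials are
irreducible over `ℚ`, every primitive `n`-th root of unity is then a root of it
(`conjugate_relation`). Since `s` is invertible modulo `n`, there is a primitive root `η` with
`η ^ s = ζ`; with `η ^ b = ζ ^ r`, `0 < r < n`, the relation becomes
`|ζ ^ r - 1| |ζ + 1| = R |ζ - 1| |ζ ^ r + 1|`, that is, `|tan (πr/n)| = R tan (π/n) < tan (π/n)`.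
This is impossible: among the nontrivial `n`-th roots of unity, `ζ` is nearest to `1` and farthest
from `-1` (`cos_two_pi_mul_le`).
-/

open Polynomial in
/-- Galois conjugation for the relation between tangents: it passes from one primitive `n`-th root of
unity to all its powers of exponent coprime to `n`. -/
lemma conjugate_relation {n : ℕ} (hn : 0 < n) {z : ℂ} (hz : IsPrimitiveRoot z n) (q : ℚ) (b s a : ℕ)
    (ha : a.Coprime n)
    (h : (z ^ b - 1) * (z ^ s + 1) = q * ((z ^ s - 1) * (z ^ b + 1))) :
    ((z ^ a) ^ b - 1) * ((z ^ a) ^ s + 1) = q * (((z ^ a) ^ s - 1) * ((z ^ a) ^ b + 1)) := by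
  set P : ℚ[X] := (X ^ b - 1) * (X ^ s + 1) - C q * ((X ^ s - 1) * (X ^ b + 1)) with hP
  have hev (w : ℂ) : aeval w P =
      (w ^ b - 1) * (w ^ s + 1) - q * ((w ^ s - 1) * (w ^ b + 1)) := by
    simp [hP]
  have hdvd : minpoly ℚ z ∣ P := minpoly.dvd ℚ z (by rw [hev, h, sub_self])
  have hz' := hz.pow_of_coprime a ha
  rw [← cyclotomic_eq_minpoly_rat hz hn, cyclotomic_eq_minpoly_rat hz' hn] at hdvd
  have h0 := aeval_eq_zero_of_dvd_aeval_eq_zero hdvd (minpoly.aeval ℚ (z ^ a))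
  rw [hev] at h0
  exact sub_eq_zero.mp h0

/-- The relation `tan x = q tan y`, cleared of denominators, in terms of `exp (2ix)` and
`exp (2iy)`. -/
lemma exp_relation (x y q : ℝ) (h : Real.sin x * Real.cos y = q * (Real.sin y * Real.cos x)) :
    (Complex.exp (2 * x * Complex.I) - 1) * (Complex.exp (2 * y * Complex.I) + 1) =
      q * ((Complex.exp (2 * y * Complex.I) - 1) * (Complex.exp (2 * x * Complex.I) + 1)) := by
  -- `exp (2iθ) - 1 = 2i sin θ exp (iθ)` and `exp (2iθ) + 1 = 2 cos θ exp (iθ)`.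
  have key (t : ℝ) :
      Complex.exp (2 * t * Complex.I) - 1 =
        2 * Complex.I * Complex.sin t * Complex.exp (t * Complex.I) ∧
      Complex.exp (2 * t * Complex.I) + 1 =
        2 * Complex.cos t * Complex.exp (t * Complex.I) := by
    have e : Complex.exp (2 * t * Complex.I) = Complex.exp (t * Complex.I) ^ 2 := by
      rw [← Complex.exp_nat_mul]; congr 1; push_cast; ring
    rw [e, Complex.exp_mul_I]
    have h1 := Complex.sin_sq_add_cos_sq (t : ℂ)
    have hI := Complex.I_sq
    constructor
    · linear_combination h1 - Complex.sin t ^ 2 * hI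
    · linear_combination -h1 + Complex.sin t ^ 2 * hI
  have hc : Complex.sin x * Complex.cos y = q * (Complex.sin y * Complex.cos x) := by
    exact_mod_cast congrArg Complex.ofReal h
  rw [(key x).1, (key x).2, (key y).1, (key y).2]
  linear_combination
    4 * Complex.I * Complex.exp (x * Complex.I) * Complex.exp (y * Complex.I) * hc

/-- Among the nontrivial `n`-th roots of unity, `exp (2πi/n)` has the largest real part. -/
lemma cos_two_pi_mul_le {n r : ℕ} (hr : 0 < r) (hrn : r < n) :
    Real.cos (2 * (Real.pi * r / n)) ≤ Real.cos (2 * (Real.pi / n)) := by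
  have hπ := Real.pi_pos
  have hn : (0 : ℝ) < n := by exact_mod_cast hr.trans hrn
  have aux : ∀ k : ℕ, 0 < k → 2 * k ≤ n →
      Real.cos (2 * (Real.pi * k / n)) ≤ Real.cos (2 * (Real.pi / n)) := by
    intro k hk hkn
    have hk1 : (1 : ℝ) ≤ k := by exact_mod_cast hk
    have hkn' : (2 : ℝ) * k ≤ n := by exact_mod_cast hkn
    apply Real.cos_le_cos_of_nonneg_of_le_pi
    · positivity
    · rw [← mul_div_assoc, div_le_iff₀ hn]; nlinarith
    · gcongr; nlinarith
  rcases le_total (2 * r) n with h | h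
  · exact aux r hr h
  · have := aux (n - r) (by omega) (by omega)
    rw [Nat.cast_sub hrn.le] at this
    rwa [show 2 * (Real.pi * ((n : ℝ) - r) / n) = 2 * Real.pi - 2 * (Real.pi * r / n) by
      field_simp, Real.cos_two_pi_sub] at this

/-- The tangent quotient is irrational. -/
lemma tan_div_tan_ne_rat (s n b : ℕ) (hb : 0 < b) (hcop : Nat.gcd s n = 1)
    (hns : n ≥ 2 * s + 1) (hbs : b < s) (q : ℚ) :
    Real.tan (Real.pi * b / n) / Real.tan (Real.pi * s / n) ≠ q := by
  intro hq
  have hπ := Real.pi_pos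
  have hn : 0 < n := by omega
  have hnR : (0 : ℝ) < n := by exact_mod_cast hn
  have hbR : (0 : ℝ) < b := by exact_mod_cast hb
  have hbsR : (b : ℝ) < s := by exact_mod_cast hbs
  have hnsR : (2 : ℝ) * s + 1 ≤ n := by exact_mod_cast hns
  have hx0 : 0 < Real.pi * b / n := by positivity
  have hxy : Real.pi * b / n < Real.pi * s / n := by gcongr
  have hy : Real.pi * s / n < Real.pi / 2 := by
    rw [div_lt_div_iff₀ hnR two_pos]; nlinarith
  have htx := Real.tan_pos_of_pos_of_lt_pi_div_two hx0 (hxy.trans hy)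
  have hlt := Real.tan_lt_tan_of_lt_of_lt_pi_div_two (by linarith) hy hxy
  have hty := htx.trans hlt
  have hq0 : (0 : ℝ) < q := hq ▸ div_pos htx hty
  have hq1 : (q : ℝ) < 1 := by rw [← hq, div_lt_one hty]; exact hlt
  have hcx : 0 < Real.cos (Real.pi * b / n) :=
    Real.cos_pos_of_mem_Ioo ⟨by linarith, by linarith⟩
  have hcy : 0 < Real.cos (Real.pi * s / n) :=
    Real.cos_pos_of_mem_Ioo ⟨by linarith, by linarith⟩
  have hsc : Real.sin (Real.pi * b / n) * Real.cos (Real.pi * s / n) =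
      q * (Real.sin (Real.pi * s / n) * Real.cos (Real.pi * b / n)) := by
    rw [div_eq_iff hty.ne', Real.tan_eq_sin_div_cos, Real.tan_eq_sin_div_cos] at hq
    field_simp at hq
    linarith
  obtain ⟨z, hzdef⟩ : ∃ z, z = Complex.exp (2 * Real.pi * Complex.I / n) := ⟨_, rfl⟩
  have hz : IsPrimitiveRoot z n := hzdef ▸ Complex.isPrimitiveRoot_exp n hn.ne'
  have hpow (k : ℕ) : z ^ k = Complex.exp (2 * ((Real.pi * k / n : ℝ) : ℂ) * Complex.I) := by
    rw [hzdef, ← Complex.exp_nat_mul]; congr 1; push_cast; ring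
  have hrel := exp_relation _ _ _ hsc
  rw [← hpow, ← hpow, Complex.ofReal_ratCast] at hrel
  obtain ⟨a, -, ha⟩ := Nat.exists_mul_mod_eq_one_of_coprime hcop (by omega)
  have hacop : a.Coprime n := by
    refine Nat.Coprime.coprime_mul_left (k := s) ?_
    rw [Nat.Coprime, Nat.gcd_comm, Nat.gcd_rec, ha, Nat.gcd_one_left]
  have hconj := conjugate_relation hn hz q b s a hacop hrel
  have hred (k : ℕ) : z ^ k = z ^ (k % n) := by
    rw [hz.eq_orderOf, pow_mod_orderOf]
  rw [← pow_mul, ← pow_mul, hred (a * s), mul_comm a s, ha, hred (a * b)] at hconj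
  obtain ⟨r, hr⟩ : ∃ r, r = a * b % n := ⟨_, rfl⟩
  rw [← hr] at hconj
  have hrn : r < n := hr ▸ Nat.mod_lt _ hn
  have hr0 : 0 < r := by
    rcases Nat.eq_zero_or_pos r with h | h
    · have h2 : n ∣ b :=
        hacop.symm.dvd_of_dvd_mul_left (Nat.dvd_of_mod_eq_zero (hr ▸ h))
      have := Nat.le_of_dvd hb h2
      omega
    · exact h
  have hns1 (t : ℝ) : Complex.normSq (Complex.exp (2 * (t : ℂ) * Complex.I) - 1) =
        2 - 2 * Real.cos (2 * t) ∧
      Complex.normSq (Complex.exp (2 * (t : ℂ) * Complex.I) + 1) =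
        2 + 2 * Real.cos (2 * t) := by
    have e : (2 * (t : ℂ)) = ((2 * t : ℝ) : ℂ) := by push_cast; rfl
    have h1 := Real.sin_sq_add_cos_sq (2 * t)
    rw [e, Complex.normSq_apply, Complex.normSq_apply]
    simp only [Complex.sub_re, Complex.sub_im, Complex.add_re, Complex.add_im,
      Complex.exp_ofReal_mul_I_re, Complex.exp_ofReal_mul_I_im, Complex.one_re, Complex.one_im]
    constructor <;> linear_combination h1
  have hN := congrArg Complex.normSq hconj
  rw [hpow r, hpow 1, ← Complex.ofReal_ratCast] at hN
  simp only [Complex.normSq_mul, (hns1 _).1, (hns1 _).2, Complex.normSq_ofReal, Nat.cast_one,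
    mul_one] at hN
  have hC := cos_two_pi_mul_le hr0 hrn
  have hn3 : (3 : ℝ) ≤ n := by exact_mod_cast (show 3 ≤ n by omega)
  have hα0 : 0 < 2 * (Real.pi / n) := by positivity
  have hαπ : 2 * (Real.pi / n) < Real.pi := by
    rw [← mul_div_assoc, div_lt_iff₀ hnR]; nlinarith
  have hc1 : Real.cos (2 * (Real.pi / n)) < 1 := by
    simpa using Real.cos_lt_cos_of_nonneg_of_le_pi le_rfl hαπ.le hα0
  have hc2 : -1 < Real.cos (2 * (Real.pi / n)) := by
    simpa using Real.cos_lt_cos_of_nonneg_of_le_pi hα0.le le_rfl hαπ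
  have hC1 := Real.neg_one_le_cos (2 * (Real.pi * r / n))
  generalize Real.cos (2 * (Real.pi / n)) = c at *
  generalize Real.cos (2 * (Real.pi * r / n)) = C at *
  -- `(1 - c) (1 + c) ≤ (1 - C) (1 + c) = q² (1 - c) (1 + C) ≤ q² (1 - c) (1 + c)` with `q² < 1`.
  have h1 : (1 - c) * (1 + c) ≤ (1 - C) * (1 + c) := by
    apply mul_le_mul_of_nonneg_right <;> linarith
  have h2 : (1 - c) * (1 + C) ≤ (1 - c) * (1 + c) := by
    apply mul_le_mul_of_nonneg_left <;> linarith
  have h3 : 0 < (1 - c) * (1 + c) := mul_pos (by linarith) (by linarith)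
  have hqq : (q : ℝ) * q < 1 := by nlinarith
  have h4 : (q : ℝ) * q * ((1 - c) * (1 + C)) ≤ q * q * ((1 - c) * (1 + c)) :=
    mul_le_mul_of_nonneg_left h2 (by positivity)
  nlinarith

/-- With `s, n` coprime, `n ≥ 2s+1`, `0 < b < s`, `m` a positive integer and
`t₁ = k₁/(2n) + (1/(2n))·tan(πb/n)/tan(πs/n)`,
`t₂ = k₂/(2n) - (1/(2n))·tan(πb/n)/tan(πs/n)`, the number `m·(t₁ - t₂)` is not an
integer: every singularity of the billiard curve `Z(s,n,m,φ)` is removable. -/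
theorem singularities_removable (s n b m : ℕ) (k₁ k₂ : ℤ)
    (hs : 0 < s) (hn : 0 < n) (hb : 0 < b) (hm : 0 < m)
    (hcop : Nat.gcd s n = 1) (hns : n ≥ 2 * s + 1) (hbs : b < s)
    (t₁ t₂ : ℝ)
    (ht₁ : t₁ = (k₁ : ℝ) / (2 * n) +
      (1 / (2 * n)) * (Real.tan (Real.pi * b / n) / Real.tan (Real.pi * s / n)))
    (ht₂ : t₂ = (k₂ : ℝ) / (2 * n) -
      (1 / (2 * n)) * (Real.tan (Real.pi * b / n) / Real.tan (Real.pi * s / n))) :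
    ¬ ∃ z : ℤ, (m : ℝ) * (t₁ - t₂) = (z : ℝ) := by
  rintro ⟨z, hz⟩
  have hm' : (m : ℝ) ≠ 0 := by exact_mod_cast hm.ne'
  have hn' : (n : ℝ) ≠ 0 := by exact_mod_cast hn.ne'
  -- Solve `m (k₁ - k₂ + 2 R) / (2 n) = z` for the tangent quotient `R`.
  apply tan_div_tan_ne_rat s n b hb hcop hns hbs ((n : ℚ) * z / m - (k₁ - k₂) / 2)
  rw [ht₁, ht₂] at hz
  generalize Real.tan (Real.pi * b / n) / Real.tan (Real.pi * s / n) = R at *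
  push_cast
  field_simp at hz ⊢
  linarith
end

section
/- Let g : ℝ → ℝ be the sawtooth function g(t) = 2·|t − ⌊t⌋ − 1/2|, and let u, v be real numbers with u − v ∉ ℤ. Then there exists a unique t₀ ∈ [0, 1/2) such that the set { t ∈ [0,1) : g(u + t) = g(v + t) } equals the two-element set {t₀, t₀ + 1/2}. -/
/-!
The sawtooth `g` is even and 1-periodic and injective on `[0, 1/2]`, so `g a = g b` holds exactly
when `a - b` or `a + b` is an integer. For `a = u + t` and `b = v + t` the first case is excluded
by hypothesis, and the second says that `2 t` is congruent to `-(u + v)` modulo 1. Hence the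
solutions in `[0, 1)` are `t₀` and `t₀ + 1/2`, where `t₀` is half the fractional part of `-(u + v)`.
-/

lemma sawtooth_eq_iff (g : ℝ → ℝ) (hg : ∀ t : ℝ, g t = 2 * |t - (⌊t⌋ : ℝ) - 1 / 2|)
    (a b : ℝ) (hab : ¬ ∃ z : ℤ, a - b = (z : ℝ)) :
    g a = g b ↔ ∃ n : ℤ, a + b = (n : ℝ) := by
  rw [hg, hg]
  have ha0 := Int.floor_le a
  have ha1 := Int.lt_floor_add_one a
  have hb0 := Int.floor_le b
  have hb1 := Int.lt_floor_add_one b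
  constructor
  · intro h
    rcases abs_eq_abs.mp (mul_left_cancel₀ two_ne_zero h) with h | h
    · exact absurd ⟨⌊a⌋ - ⌊b⌋, by push_cast; linarith⟩ hab
    · exact ⟨⌊a⌋ + ⌊b⌋ + 1, by push_cast; linarith⟩
  · rintro ⟨n, hn⟩
    -- The fractional parts of `a` and `b` sum to an integer in `[0, 2)`; the sum `0` would make
    -- both `a` and `b` integers.
    have h0 : ⌊a⌋ + ⌊b⌋ ≤ n := by
      have : ((⌊a⌋ + ⌊b⌋ : ℤ) : ℝ) ≤ n := by push_cast; linarith
      exact_mod_cast this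
    have h2 : n < ⌊a⌋ + ⌊b⌋ + 2 := by
      have : (n : ℝ) < ((⌊a⌋ + ⌊b⌋ + 2 : ℤ) : ℝ) := by push_cast; linarith
      exact_mod_cast this
    have hne : n ≠ ⌊a⌋ + ⌊b⌋ := by
      rintro rfl
      push_cast at hn
      exact hab ⟨⌊a⌋ - ⌊b⌋, by push_cast; linarith⟩
    obtain rfl : n = ⌊a⌋ + ⌊b⌋ + 1 := by omega
    push_cast at hn
    congr 1
    exact abs_eq_abs.mpr (Or.inr (by linarith))

/-- For the sawtooth function `g` and reals `u, v` with `u - v ∉ ℤ`, there is a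
unique `t₀ ∈ [0, 1/2)` such that the set of `t ∈ [0,1)` with `g(u+t) = g(v+t)`
is exactly `{t₀, t₀ + 1/2}`. -/
theorem sawtooth_equal_height_phases (g : ℝ → ℝ)
    (hg : ∀ t : ℝ, g t = 2 * |t - (⌊t⌋ : ℝ) - 1 / 2|)
    (u v : ℝ) (huv : ¬ ∃ z : ℤ, u - v = (z : ℝ)) :
    ∃! t₀ : ℝ, t₀ ∈ Set.Ico (0 : ℝ) (1 / 2) ∧
      {t ∈ Set.Ico (0 : ℝ) 1 | g (u + t) = g (v + t)} = {t₀, t₀ + 1 / 2} := by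
  have key (t : ℝ) : g (u + t) = g (v + t) ↔ ∃ n : ℤ, u + t + (v + t) = (n : ℝ) :=
    sawtooth_eq_iff g hg _ _ (by rwa [add_sub_add_right_eq_sub])
  have hf0 := Int.fract_nonneg (-(u + v))
  have hf1 := Int.fract_lt_one (-(u + v))
  have hf := Int.floor_add_fract (-(u + v))
  set f := Int.fract (-(u + v))
  set m := ⌊-(u + v)⌋
  have hS : {t ∈ Set.Ico (0 : ℝ) 1 | g (u + t) = g (v + t)} = {f / 2, f / 2 + 1 / 2} := by
    ext t
    simp only [Set.mem_setOf_eq, Set.mem_Ico, Set.mem_insert_iff, Set.mem_singleton_iff, key]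
    constructor
    · rintro ⟨⟨ht0, ht1⟩, n, hn⟩
      -- `2 t = f + (n + m)` lies in `[0, 2)`, so `n + m` is `0` or `1`.
      have h0 : -1 < n + m := by
        have : ((-1 : ℤ) : ℝ) < ((n + m : ℤ) : ℝ) := by push_cast; linarith
        exact_mod_cast this
      have h2 : n + m < 2 := by
        have : ((n + m : ℤ) : ℝ) < ((2 : ℤ) : ℝ) := by push_cast; linarith
        exact_mod_cast this
      obtain h | h : n = -m ∨ n = 1 - m := by omega
      · left; rw [h] at hn; push_cast at hn; linarith
      · right; rw [h] at hn; push_cast at hn; linarith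
    · rintro (rfl | rfl)
      · exact ⟨⟨by linarith, by linarith⟩, -m, by push_cast; linarith⟩
      · exact ⟨⟨by linarith, by linarith⟩, 1 - m, by push_cast; linarith⟩
  refine ⟨f / 2, ⟨⟨by linarith, by linarith⟩, hS⟩, ?_⟩
  rintro s ⟨⟨hs0, hs1⟩, hs⟩
  have hmem : s ∈ ({f / 2, f / 2 + 1 / 2} : Set ℝ) := by
    rw [← hS, hs]; exact Set.mem_insert _ _
  rcases hmem with h | h
  · exact h
  · rw [Set.mem_singleton_iff] at h
    linarith
end
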